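/- Every minimal strongly connected digraph of order n ≥ 2 has at least two linear vertices, i.e., at least two vertices whose indegree and outdegree both equal 1. -/

import Mathlib

/-- Reachability in a digraph given by its arc set `A`. -/
def Reach {α : Type*} (A : Finset (α × α)) (u v : α) : Prop :=
  Relation.ReflTransGen (fun a b => (a, b) ∈ A) u v

/-- A digraph with vertex set `V` and arc set `A` is strongly connected if
every vertex reaches every other vertex by a directed path. -/
def StrongConn {α : Type*} (V : Finset α) (A : Finset (α × α)) : Prop :=
  ∀ u ∈ V, ∀ v ∈ V, Reach A u v

/-- Minimal strongly connected: strongly connected and removing any arc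
destroys strong connectivity. -/
def MSC {α : Type*} [DecidableEq α] (V : Finset α) (A : Finset (α × α)) : Prop :=
  StrongConn V A ∧ ∀ a ∈ A, ¬ StrongConn V (A.erase a)

/-- `l` is a directed (simple) path from `u` to `v` in the digraph with arc set `A`. -/
def IsPath {α : Type*} (A : Finset (α × α)) (u v : α) (l : List α) : Prop :=
  l.Chain' (fun a b => (a, b) ∈ A) ∧ l.head? = some u ∧ l.getLast? = some v ∧ l.Nodup

/-- `(u,v)` is a transitive arc: it is an arc and there is a directed path from
`u` to `v` distinct from the single arc `(u,v)`. -/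
def TransArc {α : Type*} (A : Finset (α × α)) (u v : α) : Prop :=
  (u, v) ∈ A ∧ ∃ l, IsPath A u v l ∧ l ≠ [u, v]

/-- `l` (a list of distinct vertices, of length ≥ 2) is a directed cycle:
consecutive vertices are joined by arcs, and there is an arc from the last
vertex back to the first. -/
def IsCycle {α : Type*} (A : Finset (α × α)) (l : List α) : Prop :=
  ∃ h : l ≠ [], l.Nodup ∧ 2 ≤ l.length ∧
    List.Chain (fun a b => (a, b) ∈ A) (l.getLast h) l

/-- Well-formedness: nonempty vertex set, arcs join vertices of `V`, no loops. -/
def GoodDigraph {α : Type*} (V : Finset α) (A : Finset (α × α)) : Prop :=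
  V.Nonempty ∧ ∀ a ∈ A, a.1 ∈ V ∧ a.2 ∈ V ∧ a.1 ≠ a.2

/-- Outdegree of a vertex. -/
def outdeg {α : Type*} [DecidableEq α] (A : Finset (α × α)) (v : α) : ℕ :=
  (A.filter (fun a => a.1 = v)).card

/-- Indegree of a vertex. -/
def indeg {α : Type*} [DecidableEq α] (A : Finset (α × α)) (v : α) : ℕ :=
  (A.filter (fun a => a.2 = v)).card

/-- A linear vertex has indegree and outdegree equal to 1. -/
def LinearVertex {α : Type*} [DecidableEq α] (A : Finset (α × α)) (v : α) : Prop :=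
  indeg A v = 1 ∧ outdeg A v = 1

/-- The digraph is a directed `n`-cycle: its vertices can be listed
`v₁, …, vₙ` so that the arcs are exactly `(v₁,v₂), …, (vₙ,v₁)`. -/
def IsCycleDigraph {α : Type*} [DecidableEq α] (V : Finset α) (A : Finset (α × α)) : Prop :=
  ∃ l : List α, l.Nodup ∧ 2 ≤ l.length ∧ l.toFinset = V ∧ A = (l.zip (l.rotate 1)).toFinset

/-- A directed tree: every arc is accompanied by its reverse, and the
underlying undirected graph (on the vertex set `V`) is a tree. -/
def IsDirTree {α : Type*} [DecidableEq α] (V : Finset α) (A : Finset (α × α)) : Prop :=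
  (∀ u v : α, (u, v) ∈ A → (v, u) ∈ A) ∧
  (SimpleGraph.fromRel (fun a b : {x // x ∈ V} => ((a : α), (b : α)) ∈ A)).IsTree

/-- `(V', A')` is the (internal or external) expansion of `(V, A)` by the new
vertex `v`.  Internal: an arc `(u,w)` is replaced by `(u,v)` and `(v,w)`.
External: the arcs `(u,v)` and `(v,w)` are added for vertices `u, w ∈ V`. -/
def IsExpansionBy {α : Type*} [DecidableEq α] (v : α) (V : Finset α) (A : Finset (α × α))
    (V' : Finset α) (A' : Finset (α × α)) : Prop :=
  v ∉ V ∧ V' = insert v V ∧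
    ((∃ u w, (u, w) ∈ A ∧ A' = insert (u, v) (insert (v, w) (A.erase (u, w)))) ∨
     (∃ u ∈ V, ∃ w ∈ V, A' = insert (u, v) (insert (v, w) A)))

lemma reach_mono {α : Type*} {A B : Finset (α × α)} (hAB : A ⊆ B) {u v : α}
    (h : Reach A u v) : Reach B u v :=
  Relation.ReflTransGen.mono (fun _ _ h => hAB h) _ _ h

/-- Arcs induced on `W`. -/
def indArcs {α : Type*} [DecidableEq α] (A : Finset (α × α)) (W : Finset α) : Finset (α × α) :=
  A.filter (fun a => a.1 ∈ W ∧ a.2 ∈ W)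

/-- Reversed arcs. -/
def revArcs {α : Type*} [DecidableEq α] (A : Finset (α × α)) : Finset (α × α) :=
  A.image Prod.swap

lemma mem_revArcs {α : Type*} [DecidableEq α] (A : Finset (α × α)) (a b : α) :
    (a, b) ∈ revArcs A ↔ (b, a) ∈ A := by
  simp [revArcs]

lemma reach_rev {α : Type*} [DecidableEq α] {A B : Finset (α × α)}
    (hAB : ∀ a b, (a, b) ∈ A → (b, a) ∈ B) {u v : α} (h : Reach A u v) : Reach B v u := by
  induction h with
  | refl => exact Relation.ReflTransGen.refl
  | tail _ hbc ih => exact Relation.ReflTransGen.head (hAB _ _ hbc) ih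

lemma reach_to_tail {α : Type*} [DecidableEq α] {A : Finset (α × α)} {u b : α} (d : α)
    (h : Reach A u b) : Reach (A.erase (b, d)) u b := by
  induction h using Relation.ReflTransGen.head_induction_on with
  | refl => exact Relation.ReflTransGen.refl
  | @head x y hxy _ ih =>
    by_cases hx : x = b
    · subst hx; exact Relation.ReflTransGen.refl
    · refine Relation.ReflTransGen.head ?_ ih
      simp [hx, hxy]

lemma reach_first {α : Type*} [DecidableEq α] {A : Finset (α × α)} {u b w : α}
    (h : Reach A u w) : Reach (A.filter (fun a => a.1 ≠ b)) u w ∨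
      ∃ c, (b, c) ∈ A ∧ Reach (A.filter (fun a => a.1 ≠ b)) c w := by
  induction h using Relation.ReflTransGen.head_induction_on with
  | refl => exact Or.inl Relation.ReflTransGen.refl
  | @head x y hxy _ ih =>
    rcases ih with ih | ih
    · by_cases hx : x = b
      · subst hx; exact Or.inr ⟨y, hxy, ih⟩
      · exact Or.inl (Relation.ReflTransGen.head (by simp [hx, hxy]) ih)
    · exact Or.inr ih

lemma out_one {α : Type*} [DecidableEq α] (V : Finset α) (A : Finset (α × α))
    (hg : GoodDigraph V A) (h : MSC V A) (W : Finset α) (hWV : W ⊆ V) (hW0 : W.Nonempty)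
    (hWs : StrongConn W (indArcs A W))
    (hmax : ∀ R, W ⊆ R → R ⊆ V → StrongConn R (indArcs A R) → R = W ∨ R = V)
    (b : α) (hbV : b ∈ V) (hbW : b ∉ W) : outdeg A b = 1 := by
  obtain ⟨w, hw⟩ := hW0
  have hbw : b ≠ w := fun e => hbW (e ▸ hw)
  obtain ⟨c, hc, hcw⟩ : ∃ c, (b, c) ∈ A ∧ Reach (A.filter (fun a => a.1 ≠ b)) c w := by
    rcases reach_first (b := b) (h.1 b hbV w (hWV hw)) with h1 | h1
    · exfalso
      rcases Relation.ReflTransGen.cases_head h1 with h2 | ⟨y, h2, _⟩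
      · exact hbw h2
      · simp at h2
    · exact h1
  unfold outdeg
  rw [Finset.card_eq_one]
  refine ⟨(b, c), ?_⟩
  ext ⟨x, d⟩
  simp only [Finset.mem_filter, Finset.mem_singleton, Prod.mk.injEq]
  refine ⟨?_, ?_⟩
  swap
  · rintro ⟨rfl, rfl⟩; exact ⟨hc, rfl⟩
  rintro ⟨hd, rfl⟩
  refine ⟨rfl, ?_⟩
  by_contra hdc
  classical
  set B := A.erase (x, d) with hB
  have hBA : B ⊆ A := Finset.erase_subset _ _
  have hxw : Reach B x w := by
    refine Relation.ReflTransGen.head (b := c) ?_ (reach_mono ?_ hcw)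
    · simp [hB, hc, Ne.symm hdc]
    · rintro ⟨p, q⟩ hpq
      simp only [Finset.mem_filter] at hpq
      simp [hB, hpq.1, hpq.2]
  have hwx : Reach B w x := reach_to_tail d (h.1 w (hWV hw) x hbV)
  have hindB : indArcs A W ⊆ B := by
    rintro ⟨p, q⟩ hpq
    simp only [indArcs, Finset.mem_filter] at hpq
    have : p ≠ x := fun e => hbW (e ▸ hpq.2.1)
    simp [hB, hpq.1, this]
  let R := V.filter (fun v => Reach B w v ∧ Reach B v w)
  have hRs : StrongConn R (indArcs A R) := by
    intro u hu v hv
    have hu' := Finset.mem_filter.1 hu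
    have hv' := Finset.mem_filter.1 hv
    have huv : Reach B u v := hu'.2.2.trans hv'.2.1
    clear hu
    have huV := hu'.2.1
    clear hu'
    induction huv using Relation.ReflTransGen.head_induction_on with
    | refl => exact Relation.ReflTransGen.refl
    | @head p q hpq hqv ih =>
      have hA := hg.2 _ (hBA hpq)
      have hq : Reach B w q := huV.tail hpq
      have hqw : Reach B q w := Relation.ReflTransGen.trans hqv hv'.2.2
      refine Relation.ReflTransGen.head ?_ (ih hq)
      simp only [indArcs, Finset.mem_filter, R]
      exact ⟨hBA hpq, ⟨hA.1, huV, Relation.ReflTransGen.head hpq hqw⟩, hA.2.1, hq, hqw⟩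
  have hWR : W ⊆ R := fun v hv => Finset.mem_filter.2
    ⟨hWV hv, reach_mono hindB (hWs w hw v hv), reach_mono hindB (hWs v hv w hw)⟩
  rcases hmax R hWR (Finset.filter_subset _ _) hRs with e | e
  · exact hbW (e ▸ Finset.mem_filter.2 ⟨hbV, hwx, hxw⟩)
  · refine h.2 _ hd fun u hu v hv => ?_
    rw [← e] at hu hv
    exact (Finset.mem_filter.1 hu).2.2.trans (Finset.mem_filter.1 hv).2.1

lemma strongConn_rev {α : Type*} [DecidableEq α] {V : Finset α} {A B : Finset (α × α)}
    (hAB : ∀ a b, (a, b) ∈ A → (b, a) ∈ B) (h : StrongConn V A) : StrongConn V B :=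
  fun u hu v hv => reach_rev hAB (h v hv u hu)

lemma outdeg_rev {α : Type*} [DecidableEq α] (A : Finset (α × α)) (v : α) :
    outdeg (revArcs A) v = indeg A v := by
  unfold outdeg indeg revArcs
  rw [Finset.filter_image, Finset.card_image_of_injective _ Prod.swap_injective]
  simp

lemma msc_rev {α : Type*} [DecidableEq α] {V : Finset α} {A : Finset (α × α)}
    (h : MSC V A) : MSC V (revArcs A) := by
  refine ⟨strongConn_rev (fun a b hab => (mem_revArcs _ _ _).2 hab) h.1, ?_⟩
  rintro ⟨p, q⟩ hpq hs
  rw [mem_revArcs] at hpq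
  refine h.2 _ hpq (strongConn_rev ?_ hs)
  intro a b hab
  simp only [Finset.mem_erase, mem_revArcs, ne_eq, Prod.mk.injEq] at hab ⊢
  exact ⟨fun e => hab.1 ⟨e.2, e.1⟩, hab.2⟩

lemma exists_linear {α : Type*} [DecidableEq α] (V : Finset α) (A : Finset (α × α))
    (hg : GoodDigraph V A) (hn : 2 ≤ V.card) (h : MSC V A) (v : α) (hv : v ∈ V) :
    ∃ w ∈ V, w ≠ v ∧ LinearVertex A w := by
  classical
  let F := V.powerset.filter (fun W => v ∈ W ∧ W ≠ V ∧ StrongConn W (indArcs A W))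
  have hF : F.Nonempty := by
    refine ⟨{v}, ?_⟩
    simp only [F, Finset.mem_filter, Finset.mem_powerset, Finset.singleton_subset_iff]
    refine ⟨hv, by simp, ?_, ?_⟩
    · intro e; rw [← e] at hn; simp at hn
    · intro a ha b hb
      rw [Finset.mem_singleton] at ha hb
      subst ha; subst hb; exact Relation.ReflTransGen.refl
  obtain ⟨W, hWF, hWmax⟩ := Finset.exists_max_image F Finset.card hF
  simp only [F, Finset.mem_filter, Finset.mem_powerset] at hWF hWmax
  obtain ⟨hWV, hvW, hne, hWs⟩ := hWF
  have hmax : ∀ R, W ⊆ R → R ⊆ V → StrongConn R (indArcs A R) → R = W ∨ R = V := by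
    intro R h1 h2 h3
    by_cases hR : R = V
    · exact Or.inr hR
    · exact Or.inl (Finset.eq_of_subset_of_card_le h1 (hWmax R ⟨h2, h1 hvW, hR, h3⟩)).symm
  obtain ⟨b, hbV, hbW⟩ := Finset.exists_of_ssubset (Finset.ssubset_iff_subset_ne.2 ⟨hWV, hne⟩)
  refine ⟨b, hbV, fun e => hbW (e ▸ hvW), ?_, ?_⟩
  · rw [← outdeg_rev]
    refine out_one V (revArcs A) ⟨hg.1, ?_⟩ (msc_rev h) W hWV ⟨v, hvW⟩ ?_ ?_ b hbV hbW
    · rintro ⟨p, q⟩ hpq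
      have := hg.2 _ ((mem_revArcs _ _ _).1 hpq)
      exact ⟨this.2.1, this.1, this.2.2.symm⟩
    · refine strongConn_rev ?_ hWs
      intro a b hab
      simp only [indArcs, Finset.mem_filter, mem_revArcs] at hab ⊢
      exact ⟨hab.1, hab.2.2, hab.2.1⟩
    · intro R h1 h2 h3
      refine hmax R h1 h2 (strongConn_rev ?_ h3)
      intro a b hab
      simp only [indArcs, Finset.mem_filter, mem_revArcs] at hab ⊢
      exact ⟨hab.1, hab.2.2, hab.2.1⟩
  · exact out_one V A hg h W hWV ⟨v, hvW⟩ hWs hmax b hbV hbW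

/-- every MSC digraph of order `n ≥ 2` has at least two linear
vertices. -/
theorem stmt_7 {α : Type*} [DecidableEq α] (V : Finset α) (A : Finset (α × α))
    (hg : GoodDigraph V A) (hn : 2 ≤ V.card) (h : MSC V A) :
    ∃ v ∈ V, ∃ w ∈ V, v ≠ w ∧ LinearVertex A v ∧ LinearVertex A w := by
  obtain ⟨u, hu⟩ := hg.1
  obtain ⟨v, hv, _, hvl⟩ := exists_linear V A hg hn h u hu
  obtain ⟨w, hw, hwv, hwl⟩ := exists_linear V A hg hn h v hv
  exact ⟨v, hv, w, hw, hwv.symm, hvl, hwl⟩
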